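/- Existence of minimizers: let X ∈ L^ψ and let ᾱ := max{α ∈ [0,1) : φ(0)·α + φ(1/(1−α))·(1−α) ≤ β}. If P(X = esssup(X)) < 1 − ᾱ, then the infimum in the definition ρ_{φ,β}(X) = inf_{μ∈ℝ, t>0} t·(β + μ + E[ψ(X/t − μ)]) is attained at some μ* ∈ ℝ and t* > 0. -/

import Mathlib

open MeasureTheory
open scoped ENNReal

noncomputable section

/-- A divergence function: convex, lower semicontinuous `φ : ℝ → ℝ ∪ {∞}` with `φ 1 = 0`,
effective domain `[0, ∞)` and superlinear growth `φ x / x → ∞` as `x → ∞`. -/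
structure IsDivergenceFunction (φ : ℝ → EReal) : Prop where
  convex : ∀ x y a b : ℝ, 0 < a → 0 < b → a + b = 1 →
    φ (a * x + b * y) ≤ (a : EReal) * φ x + (b : EReal) * φ y
  lsc : LowerSemicontinuous φ
  ne_bot : ∀ x : ℝ, φ x ≠ ⊥
  one : φ 1 = 0
  domain : ∀ x : ℝ, φ x ≠ ⊤ ↔ 0 ≤ x
  superlinear : ∀ M : ℝ, ∃ N : ℝ, ∀ x : ℝ, N ≤ x → ((M * x : ℝ) : EReal) ≤ φ x

/-- The convex conjugate `ψ(y) = sup_z (y·z − φ(z))`, as an extended real number. -/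
def psiE (φ : ℝ → EReal) (y : ℝ) : EReal := ⨆ z : ℝ, (((y * z : ℝ) : EReal) - φ z)

/-- The convex conjugate, as a real number (it is finite for divergence functions). -/
def psiR (φ : ℝ → EReal) (y : ℝ) : ℝ := (psiE φ y).toReal

open Classical in
/-- The objective `t (β + μ + E ψ(X/t − μ))` of the φ-divergence risk measure;
the value is `⊤` when `ψ(X/t − μ)` fails to be integrable. -/
def rhoObj {Ω : Type*} [MeasurableSpace Ω] (φ : ℝ → EReal) (β : ℝ) (P : Measure Ω)
    (X : Ω → ℝ) (μ t : ℝ) : EReal :=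
  if Integrable (fun ω => psiR φ (X ω / t - μ)) P then
    (((t * (β + μ + ∫ ω, psiR φ (X ω / t - μ) ∂P)) : ℝ) : EReal)
  else ⊤

/-- The φ-divergence risk measure `ρ_{φ,β}(X) = inf_{μ ∈ ℝ, t > 0} t (β + μ + E ψ(X/t − μ))`. -/
def rhoDiv {Ω : Type*} [MeasurableSpace Ω] (φ : ℝ → EReal) (β : ℝ) (P : Measure Ω)
    (X : Ω → ℝ) : EReal :=
  ⨅ (μ : ℝ) (t : ℝ) (_ : 0 < t), rhoObj φ β P X μ t

variable {Ω : Type*} [MeasurableSpace Ω]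

/-!
Put `m = μ t` and `f = φ` on `[0, ∞)`. By `E[X - m] = E X - m`, the objective
`t (β + μ + E ψ(X/t - μ))` equals `E X + β t + E[t ψ((X - m)/t) - (X - m)]`, and the integrand is
the supremum over `z ≥ 0` of the functions `(z - 1)(X - m) - t f(z)`, affine in `(m, t)` and equal
to `0` at `z = 1`. That supremum makes sense at `t = 0` and is jointly lower semicontinuous and
nonnegative, so by Fatou the expectation is lower semicontinuous on the closed half-plane `t ≥ 0`;
the choices `z = 0` and `z = 2` make its sublevel sets bounded, and a minimizer `(m, t)` exists
there.

It remains to move a minimizer off the line `t = 0`. A finite value at `(m, 0)` forces `X ≤ m`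
almost surely, and the value is then at least `m - E X ≥ s - E X`, where `s = esssup X`. With
`p = P(X = s)`, the objective at `μ = s/t - y` is `s + t (β - y + E ψ((X - s)/t + y))`, where the
bracket tends to `β - y + p ψ(y) - (1 - p) φ(0)` as `t → 0`. The supremum over `y` of
`y - p ψ(y)` is `p φ(1/p)` (and `∞` if `p = 0`), so a suitable `y` makes the bracket negative
exactly when `β < p φ(1/p) + (1 - p) φ(0)`, which `p < 1 - ᾱ` guarantees.
-/

open Set Filter Topology
open scoped NNReal

theorem exists_isMinOn_of_sublevel_subset {α γ : Type*} [TopologicalSpace α] [LinearOrder γ]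
    {F : α → γ} {s K : Set α} {x₀ : α} (hx₀ : x₀ ∈ s) (hK : IsCompact K) (hKs : K ⊆ s)
    (hF : LowerSemicontinuousOn F K) (hsub : ∀ x ∈ s, F x ≤ F x₀ → x ∈ K) :
    ∃ x ∈ s, IsMinOn F s x := by
  have hx₀K : x₀ ∈ K := hsub x₀ hx₀ le_rfl
  obtain ⟨x, hxK, hmin⟩ := hF.exists_isMinOn ⟨x₀, hx₀K⟩ hK
  refine ⟨x, hKs hxK, isMinOn_iff.2 fun y hy => ?_⟩
  rcases le_total (F y) (F x₀) with hle | hle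
  · exact isMinOn_iff.1 hmin y (hsub y hy hle)
  · exact (isMinOn_iff.1 hmin x₀ hx₀K).trans hle

theorem exists_forall_add_mul_sub_le_of_convexOn {f : ℝ → ℝ} {s : Set ℝ} (hf : ConvexOn ℝ s f)
    {x : ℝ} (hx : x ∈ interior s) : ∃ c, ∀ z ∈ s, f x + c * (z - x) ≤ f z := by
  refine ⟨derivWithin f (Ioi x) x, fun z hz => ?_⟩
  rcases lt_trichotomy x z with hxz | rfl | hzx
  · have hslope := hf.rightDeriv_le_slope_of_mem_interior hx hz hxz
    rw [slope_def_field, le_div_iff₀ (sub_pos.2 hxz)] at hslope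
    linarith
  · simp
  · have hslope := (hf.slope_le_leftDeriv_of_mem_interior hz hx hzx).trans
      (hf.leftDeriv_le_rightDeriv_of_mem_interior hx)
    rw [slope_def_field, div_le_iff₀ (sub_pos.2 hzx)] at hslope
    linarith

theorem lowerSemicontinuous_lintegral {α : Type*} [TopologicalSpace α] [FirstCountableTopology α]
    {P : Measure Ω} {F : α → Ω → ℝ≥0∞} (hmeas : ∀ x, AEMeasurable (F x) P)
    (hF : ∀ ω, LowerSemicontinuous fun x => F x ω) :
    LowerSemicontinuous fun x => ∫⁻ ω, F x ω ∂P :=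
  lowerSemicontinuous_iff_le_liminf.2 fun x =>
    (lintegral_mono fun ω => lowerSemicontinuous_iff_le_liminf.1 (hF ω) x).trans
      (lintegral_liminf_le' hmeas)

theorem ofReal_integral_le_lintegral_ofReal {P : Measure Ω} {g : Ω → ℝ} (hg : Integrable g P) :
    ENNReal.ofReal (∫ ω, g ω ∂P) ≤ ∫⁻ ω, ENNReal.ofReal (g ω) ∂P := by
  rw [integral_eq_lintegral_pos_part_sub_lintegral_neg_part hg]
  exact (ENNReal.ofReal_le_ofReal (sub_le_self _ ENNReal.toReal_nonneg)).trans
    ENNReal.ofReal_toReal_le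

section MonotoneComposition

variable {P : Measure Ω} [IsFiniteMeasure P] {g : ℝ → ℝ} {a : ℝ} {Y : Ω → ℝ}

theorem norm_le_max_of_monotone_of_tendsto_atBot (hg : Monotone g) (ha : Tendsto g atBot (𝓝 a))
    {x c : ℝ} (hx : x ≤ c) : ‖g x‖ ≤ max ‖a‖ ‖g c‖ :=
  abs_le_max_abs_abs (hg.le_of_tendsto ha x) (hg hx)

theorem integrable_comp_of_monotone_of_ae_le (hg : Monotone g) (ha : Tendsto g atBot (𝓝 a))
    (hY : AEMeasurable Y P) {c : ℝ} (hYc : ∀ᵐ ω ∂P, Y ω ≤ c) :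
    Integrable (fun ω => g (Y ω)) P :=
  (integrable_const (max ‖a‖ ‖g c‖)).mono'
    (hg.measurable.comp_aemeasurable hY).aestronglyMeasurable
    (hYc.mono fun _ h => norm_le_max_of_monotone_of_tendsto_atBot hg ha h)

theorem tendsto_integral_comp_div_add (hg : Monotone g) (ha : Tendsto g atBot (𝓝 a))
    (hY : AEMeasurable Y P) (hY0 : ∀ᵐ ω ∂P, Y ω ≤ 0) (y : ℝ) :
    Tendsto (fun t => ∫ ω, g (Y ω / t + y) ∂P) (𝓝[>] 0)
      (𝓝 (P.real {ω | Y ω = 0} * g y + P.real {ω | Y ω = 0}ᶜ * a)) := by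
  set A := {ω | Y ω = 0}
  have hA : NullMeasurableSet A P := nullMeasurableSet_eq_fun hY aemeasurable_const
  have hlim : ∫ ω, (A.indicator (fun _ => g y) ω + Aᶜ.indicator (fun _ => a) ω) ∂P
      = P.real A * g y + P.real Aᶜ * a := by
    rw [integral_add ((integrable_const _).indicator₀ hA)
      ((integrable_const _).indicator₀ hA.compl), integral_indicator₀ hA,
      integral_indicator₀ hA.compl]
    simp
  rw [← hlim]
  refine tendsto_integral_filter_of_dominated_convergence (fun _ => max ‖a‖ ‖g y‖)
    (Eventually.of_forall fun t =>
      (hg.measurable.comp_aemeasurable ((hY.div_const t).add_const y)).aestronglyMeasurable)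
    ?_ (integrable_const _) ?_
  · filter_upwards [self_mem_nhdsWithin] with t (ht : 0 < t)
    filter_upwards [hY0] with ω hω
    exact norm_le_max_of_monotone_of_tendsto_atBot hg ha
      (add_le_of_nonpos_left (div_nonpos_of_nonpos_of_nonneg hω ht.le))
  · filter_upwards [hY0] with ω hω
    by_cases hω0 : Y ω = 0
    · simp [A, hω0]
    · have hbot : Tendsto (fun t => Y ω / t + y) (𝓝[>] 0) atBot :=
        tendsto_atBot_add_const_right _ _
          (tendsto_inv_nhdsGT_zero.const_mul_atTop_of_neg (lt_of_le_of_ne hω hω0))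
      simpa [A, hω0, Function.comp_def] using ha.comp hbot

end MonotoneComposition

theorem exists_essSup_eq_coe_of_ae_le {P : Measure Ω} [NeZero P] {X : Ω → ℝ} {m : ℝ}
    (hm : ∀ᵐ ω ∂P, X ω ≤ m) :
    ∃ s ≤ m, (∀ᵐ ω ∂P, X ω ≤ s) ∧ essSup (fun ω => ((X ω : ℝ) : EReal)) P = s := by
  set S := essSup (fun ω => ((X ω : ℝ) : EReal)) P
  have hSm : S ≤ m := essSup_le_of_ae_le _ (hm.mono fun _ h => EReal.coe_le_coe_iff.2 h)
  have hXS : ∀ᵐ ω ∂P, ((X ω : ℝ) : EReal) ≤ S := ae_le_essSup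
  obtain ⟨ω, hω⟩ := hXS.exists
  have hS : ((S.toReal : ℝ) : EReal) = S :=
    EReal.coe_toReal (hSm.trans_lt (EReal.coe_lt_top m)).ne
      ((EReal.bot_lt_coe (X ω)).trans_le hω).ne'
  rw [← hS] at hSm hXS
  exact ⟨S.toReal, EReal.coe_le_coe_iff.1 hSm, hXS.mono fun _ h => EReal.coe_le_coe_iff.1 h,
    hS.symm⟩

/-- The excess `t ψ(x/t) - x` of the perspective of the conjugate `ψ` of `f|_[0, ∞)` over the
identity, written as a supremum of affine functions of `(x, t)` so that it extends lower
semicontinuously to `t = 0`. Negative values are truncated to `0`; there are none when `f 1 = 0`. -/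
def perspectiveExcess (f : ℝ → ℝ) (x t : ℝ) : ℝ≥0∞ :=
  ⨆ z : ℝ≥0, ENNReal.ofReal (x * (z - 1) - t * f z)

/-- The excess of the objective `t (β + μ + E ψ(X/t - μ))` over `E X`, as a function of
`m = μ t` and `t`; unlike the objective it is meaningful at `t = 0`. -/
def riskExcess (f : ℝ → ℝ) (β : ℝ) (P : Measure Ω) (X : Ω → ℝ) (m t : ℝ) : ℝ≥0∞ :=
  ENNReal.ofReal (β * t) + ∫⁻ ω, perspectiveExcess f (X ω - m) t ∂P

section Perspective

variable {f : ℝ → ℝ} {β m t : ℝ} {P : Measure Ω} {X : Ω → ℝ}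

theorem ofReal_le_perspectiveExcess (f : ℝ → ℝ) (x t : ℝ) (z : ℝ≥0) :
    ENNReal.ofReal (x * (z - 1) - t * f z) ≤ perspectiveExcess f x t :=
  le_iSup (fun z : ℝ≥0 => ENNReal.ofReal (x * (z - 1) - t * f z)) z

theorem lowerSemicontinuous_perspectiveExcess {α : Type*} [TopologicalSpace α] (f : ℝ → ℝ)
    {g h : α → ℝ} (hg : Continuous g) (hh : Continuous h) :
    LowerSemicontinuous fun a => perspectiveExcess f (g a) (h a) :=
  lowerSemicontinuous_iSup fun z => by
    have haffine : Continuous fun a => g a * (z - 1) - h a * f z := by fun_prop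
    exact (ENNReal.continuous_ofReal.comp haffine).lowerSemicontinuous

theorem perspectiveExcess_eq_ofReal {x c : ℝ} (ht : 0 < t)
    (hc : IsLUB (range fun z : ℝ≥0 => x / t * z - f z) c) :
    perspectiveExcess f x t = ENNReal.ofReal (t * c - x) := by
  have hmono : Monotone fun c => ENNReal.ofReal (t * c - x) := fun c d hcd =>
    ENNReal.ofReal_le_ofReal (sub_le_sub_right (mul_le_mul_of_nonneg_left hcd ht.le) x)
  have hcont : Continuous fun c => ENNReal.ofReal (t * c - x) :=
    ENNReal.continuous_ofReal.comp (by fun_prop)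
  rw [← hc.ciSup_eq, hmono.map_ciSup_of_continuousAt hcont.continuousAt hc.bddAbove]
  refine iSup_congr fun z => congrArg ENNReal.ofReal ?_
  field_simp
  ring

theorem perspectiveExcess_zero_of_pos (f : ℝ → ℝ) {x : ℝ} (hx : 0 < x) :
    perspectiveExcess f x 0 = ∞ := by
  refine ENNReal.eq_top_of_forall_nnreal_le fun r => ?_
  convert ofReal_le_perspectiveExcess f x 0 (r / x.toNNReal + 1) using 1
  rw [← ENNReal.ofReal_coe_nnreal]
  congr 1
  push_cast
  rw [Real.coe_toNNReal x hx.le]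
  field_simp
  ring

theorem aemeasurable_perspectiveExcess (f : ℝ → ℝ) (hX : AEMeasurable X P) (m t : ℝ) :
    AEMeasurable (fun ω => perspectiveExcess f (X ω - m) t) P :=
  (lowerSemicontinuous_perspectiveExcess f continuous_id
    continuous_const).measurable.comp_aemeasurable (hX.sub_const m)

theorem lowerSemicontinuous_riskExcess (f : ℝ → ℝ) (β : ℝ) (hX : AEMeasurable X P) :
    LowerSemicontinuous fun p : ℝ × ℝ => riskExcess f β P X p.1 p.2 := by
  have hlin : Continuous fun p : ℝ × ℝ => ENNReal.ofReal (β * p.2) :=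
    ENNReal.continuous_ofReal.comp (by fun_prop)
  exact hlin.lowerSemicontinuous.add <| lowerSemicontinuous_lintegral
    (fun p => aemeasurable_perspectiveExcess f hX p.1 p.2) fun ω =>
      lowerSemicontinuous_perspectiveExcess f (continuous_const.sub continuous_fst) continuous_snd

theorem ae_le_of_riskExcess_zero_ne_top (hX : AEMeasurable X P)
    (hfin : riskExcess f β P X m 0 ≠ ∞) : ∀ᵐ ω ∂P, X ω ≤ m := by
  have hlint : ∫⁻ ω, perspectiveExcess f (X ω - m) 0 ∂P ≠ ∞ :=
    ne_top_of_le_ne_top hfin le_add_self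
  filter_upwards [ae_lt_top' (aemeasurable_perspectiveExcess f hX m 0) hlint] with ω hω
  by_contra! hlt
  exact hω.ne (perspectiveExcess_zero_of_pos f (sub_pos.2 hlt))

theorem ofReal_mul_le_riskExcess (f : ℝ → ℝ) (β : ℝ) (P : Measure Ω) (X : Ω → ℝ) (m t : ℝ) :
    ENNReal.ofReal (β * t) ≤ riskExcess f β P X m t :=
  le_self_add

variable [IsProbabilityMeasure P]

theorem ofReal_le_riskExcess (f : ℝ → ℝ) (β : ℝ) (hX : Integrable X P) (m t : ℝ) (z : ℝ≥0) :
    ENNReal.ofReal ((∫ ω, X ω ∂P - m) * (z - 1) - t * f z) ≤ riskExcess f β P X m t := by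
  have hXm : Integrable (fun ω => X ω - m) P := hX.sub (integrable_const m)
  have hint : ∫ ω, ((X ω - m) * (z - 1) - t * f z) ∂P
      = (∫ ω, X ω ∂P - m) * (z - 1) - t * f z := by
    rw [integral_sub (hXm.mul_const _) (integrable_const _), integral_mul_const,
      integral_sub hX (integrable_const m)]
    simp
  calc ENNReal.ofReal ((∫ ω, X ω ∂P - m) * (z - 1) - t * f z)
      ≤ ∫⁻ ω, ENNReal.ofReal ((X ω - m) * (z - 1) - t * f z) ∂P :=
        hint ▸ ofReal_integral_le_lintegral_ofReal
          ((hXm.mul_const _).sub (integrable_const _))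
    _ ≤ ∫⁻ ω, perspectiveExcess f (X ω - m) t ∂P :=
        lintegral_mono fun ω => ofReal_le_perspectiveExcess f (X ω - m) t z
    _ ≤ riskExcess f β P X m t := le_add_self

theorem mem_Icc_of_riskExcess_le (hβ : 0 < β) (hX : Integrable X P) (ht : 0 ≤ t) {c : ℝ}
    (hc : 0 ≤ c) (hle : riskExcess f β P X m t ≤ ENNReal.ofReal c) :
    m ∈ Icc (∫ ω, X ω ∂P - c - c / β * |f 2|) (∫ ω, X ω ∂P + c + c / β * |f 0|) ∧
      t ∈ Icc 0 (c / β) := by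
  have htc : t ≤ c / β := (le_div_iff₀' hβ).2 <|
    (ENNReal.ofReal_le_ofReal_iff hc).1 ((ofReal_mul_le_riskExcess f β P X m t).trans hle)
  have haffine (z : ℝ≥0) : (∫ ω, X ω ∂P - m) * (z - 1) - t * f z ≤ c :=
    (ENNReal.ofReal_le_ofReal_iff hc).1 ((ofReal_le_riskExcess f β hX m t z).trans hle)
  have hterm (r : ℝ) : t * r ≤ c / β * |r| :=
    (mul_le_mul_of_nonneg_left (le_abs_self r) ht).trans
      (mul_le_mul_of_nonneg_right htc (abs_nonneg r))
  have h0 := haffine 0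
  have h2 := haffine 2
  push_cast at h0 h2
  exact ⟨⟨by linarith [hterm (f 2)], by linarith [hterm (f 0)]⟩, ht, htc⟩

theorem coe_le_integral_add_riskExcess_zero (f : ℝ → ℝ) (β : ℝ) (hX : Integrable X P) (m : ℝ) :
    (m : EReal) ≤ (∫ ω, X ω ∂P : ℝ) + (riskExcess f β P X m 0 : EReal) := by
  have hle : ENNReal.ofReal (m - ∫ ω, X ω ∂P) ≤ riskExcess f β P X m 0 := by
    simpa using ofReal_le_riskExcess f β hX m 0 0
  calc (m : EReal) = (∫ ω, X ω ∂P : ℝ) + ((m - ∫ ω, X ω ∂P : ℝ) : EReal) := by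
        rw [← EReal.coe_add, add_sub_cancel]
    _ ≤ (∫ ω, X ω ∂P : ℝ) + (ENNReal.ofReal (m - ∫ ω, X ω ∂P) : EReal) :=
        add_le_add_right (EReal.coe_le_coe_iff.2 (le_max_left _ _)) _
    _ ≤ (∫ ω, X ω ∂P : ℝ) + (riskExcess f β P X m 0 : EReal) :=
        add_le_add_right (EReal.coe_ennreal_le_coe_ennreal_iff.2 hle) _

theorem exists_isMinOn_riskExcess (f : ℝ → ℝ) (hβ : 0 < β) (hX : Integrable X P) :
    ∃ p ∈ {p : ℝ × ℝ | 0 ≤ p.2},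
      IsMinOn (fun p : ℝ × ℝ => riskExcess f β P X p.1 p.2) {p | 0 ≤ p.2} p := by
  by_cases htop : ∀ p ∈ {p : ℝ × ℝ | 0 ≤ p.2}, riskExcess f β P X p.1 p.2 = ∞
  · exact ⟨0, by simp, fun p hp => le_of_le_of_eq le_top (htop p hp).symm⟩
  · push Not at htop
    obtain ⟨p₀, hp₀, hfin⟩ := htop
    refine exists_isMinOn_of_sublevel_subset hp₀ (isCompact_Icc.prod isCompact_Icc)
      (fun p hp => hp.2.1)
      ((lowerSemicontinuous_riskExcess f β hX.aemeasurable).lowerSemicontinuousOn _)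
      fun p hp hle => mem_Icc_of_riskExcess_le (f := f)
        (c := (riskExcess f β P X p₀.1 p₀.2).toReal) hβ hX hp ENNReal.toReal_nonneg ?_
    rwa [ENNReal.ofReal_toReal hfin]

end Perspective

namespace IsDivergenceFunction

variable {φ : ℝ → EReal}

theorem coe_toReal (hφ : IsDivergenceFunction φ) {z : ℝ} (hz : 0 ≤ z) :
    (((φ z).toReal : ℝ) : EReal) = φ z :=
  EReal.coe_toReal ((hφ.domain z).2 hz) (hφ.ne_bot z)

theorem eq_top (hφ : IsDivergenceFunction φ) {z : ℝ} (hz : z < 0) : φ z = ⊤ :=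
  not_not.1 fun hne => hz.not_ge ((hφ.domain z).1 hne)

theorem toReal_one (hφ : IsDivergenceFunction φ) : (φ 1).toReal = 0 := by
  simp [hφ.one]

theorem convexOn_toReal (hφ : IsDivergenceFunction φ) :
    ConvexOn ℝ (Ici 0) fun z => (φ z).toReal := by
  refine convexOn_iff_forall_pos.2 ⟨convex_Ici 0, fun x hx y hy a b ha hb hab => ?_⟩
  have hle := hφ.convex x y a b ha hb hab
  rw [← hφ.coe_toReal (mem_Ici.1 hx), ← hφ.coe_toReal (mem_Ici.1 hy),
    ← hφ.coe_toReal (add_nonneg (mul_nonneg ha.le hx) (mul_nonneg hb.le hy))] at hle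
  exact_mod_cast hle

theorem exists_subgradient (hφ : IsDivergenceFunction φ) {x : ℝ} (hx : 0 < x) :
    ∃ y, ∀ z, 0 ≤ z → (φ x).toReal + y * (z - x) ≤ (φ z).toReal :=
  exists_forall_add_mul_sub_le_of_convexOn hφ.convexOn_toReal (by simpa using hx)

theorem psiE_eq_iSup (hφ : IsDivergenceFunction φ) (y : ℝ) :
    psiE φ y = ⨆ z : ℝ≥0, ((y * z - (φ z).toReal : ℝ) : EReal) := by
  refine le_antisymm (iSup_le fun z => ?_) (iSup_le fun z => ?_)
  · rcases lt_or_ge z 0 with hz | hz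
    · simp [hφ.eq_top hz]
    · rw [← hφ.coe_toReal hz, ← EReal.coe_sub]
      exact le_iSup (fun z : ℝ≥0 => ((y * z - (φ z).toReal : ℝ) : EReal)) ⟨z, hz⟩
  · rw [EReal.coe_sub, hφ.coe_toReal z.coe_nonneg]
    exact le_iSup (fun z : ℝ => ((y * z : ℝ) : EReal) - φ z) z

theorem bddAbove_range_mul_sub (hφ : IsDivergenceFunction φ) (y : ℝ) :
    BddAbove (range fun z : ℝ≥0 => y * z - (φ z).toReal) := by
  obtain ⟨c, hc⟩ := hφ.exists_subgradient one_pos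
  obtain ⟨N, hN⟩ := hφ.superlinear y
  refine ⟨|y - c| * |N| + |c|, forall_mem_range.2 fun z => ?_⟩
  rcases le_total N z with hNz | hzN
  · have hle : y * z ≤ (φ z).toReal := by
      have := hN z hNz
      rw [← hφ.coe_toReal z.coe_nonneg] at this
      exact_mod_cast this
    linarith [show 0 ≤ |y - c| * |N| + |c| by positivity]
  · have hlin : (y - c) * z ≤ |y - c| * |N| :=
      mul_le_mul (le_abs_self _) (hzN.trans (le_abs_self N)) z.coe_nonneg (abs_nonneg _)
    have hsub := hc z z.coe_nonneg
    rw [hφ.toReal_one] at hsub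
    linarith [le_abs_self c]

theorem isLUB_psiR (hφ : IsDivergenceFunction φ) (y : ℝ) :
    IsLUB (range fun z : ℝ≥0 => y * z - (φ z).toReal) (psiR φ y) := by
  have hbdd := hφ.bddAbove_range_mul_sub y
  have hpsi : psiR φ y = ⨆ z : ℝ≥0, (y * z - (φ z).toReal) := by
    rw [psiR, hφ.psiE_eq_iSup, ← EReal.coe_strictMono.monotone.map_ciSup_of_continuousAt
      continuous_coe_real_ereal.continuousAt hbdd, EReal.toReal_coe]
  exact hpsi ▸ isLUB_ciSup hbdd

theorem mul_sub_le_psiR (hφ : IsDivergenceFunction φ) (y : ℝ) {z : ℝ} (hz : 0 ≤ z) :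
    y * z - (φ z).toReal ≤ psiR φ y :=
  (hφ.isLUB_psiR y).1 ⟨⟨z, hz⟩, rfl⟩

theorem psiR_le (hφ : IsDivergenceFunction φ) {y c : ℝ}
    (hc : ∀ z, 0 ≤ z → y * z - (φ z).toReal ≤ c) : psiR φ y ≤ c :=
  (hφ.isLUB_psiR y).2 (forall_mem_range.2 fun z => hc z z.coe_nonneg)

theorem le_psiR (hφ : IsDivergenceFunction φ) (y : ℝ) : y ≤ psiR φ y := by
  simpa [hφ.toReal_one] using hφ.mul_sub_le_psiR y zero_le_one

theorem monotone_psiR (hφ : IsDivergenceFunction φ) : Monotone (psiR φ) := fun _ y' hy =>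
  hφ.psiR_le fun _ hz =>
    (sub_le_sub_right (mul_le_mul_of_nonneg_right hy hz) _).trans (hφ.mul_sub_le_psiR y' hz)

theorem tendsto_psiR_atBot (hφ : IsDivergenceFunction φ) :
    Tendsto (psiR φ) atBot (𝓝 (-(φ 0).toReal)) := by
  refine tendsto_order.2 ⟨fun a ha => Eventually.of_forall fun y => ?_, fun b hb => ?_⟩
  · exact ha.trans_le (by simpa using hφ.mul_sub_le_psiR y le_rfl)
  · obtain ⟨b', hb', hb'b⟩ := exists_between hb
    have hlt : ((-b' : ℝ) : EReal) < φ 0 := by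
      rw [← hφ.coe_toReal le_rfl]
      exact_mod_cast neg_lt.1 hb'
    obtain ⟨δ, hδ, hnear⟩ := Metric.eventually_nhds_iff.1 (hφ.lsc 0 _ hlt)
    filter_upwards [eventually_le_atBot 0,
      eventually_le_atBot ((b' - psiR φ 0) / δ)] with y hy0 hyδ
    rw [le_div_iff₀ hδ] at hyδ
    refine (hφ.psiR_le fun z hz => ?_).trans_lt hb'b
    rcases lt_or_ge z δ with hzδ | hzδ
    · have hφz : ((-b' : ℝ) : EReal) < φ z := hnear (by simpa [abs_of_nonneg hz] using hzδ)
      rw [← hφ.coe_toReal hz, EReal.coe_lt_coe_iff] at hφz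
      linarith [mul_nonpos_of_nonpos_of_nonneg hy0 hz]
    · linarith [hφ.mul_sub_le_psiR 0 hz, mul_le_mul_of_nonpos_left hzδ hy0]

theorem exists_psiR_eq (hφ : IsDivergenceFunction φ) {x : ℝ} (hx : 0 < x) :
    ∃ y, psiR φ y = y * x - (φ x).toReal := by
  obtain ⟨y, hy⟩ := hφ.exists_subgradient hx
  exact ⟨y, le_antisymm (hφ.psiR_le fun z hz => by linarith [hy z hz])
    (hφ.mul_sub_le_psiR y hx.le)⟩

theorem exists_add_mul_psiR_lt (hφ : IsDivergenceFunction φ) {p b : ℝ} (hp : 0 ≤ p)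
    (hb : 0 < p → b < p * (φ (1 / p)).toReal) : ∃ y, b + p * psiR φ y < y := by
  rcases hp.eq_or_lt with rfl | hp
  · exact ⟨b + 1, by simp⟩
  · obtain ⟨y, hy⟩ := hφ.exists_psiR_eq (one_div_pos.2 hp)
    refine ⟨y, ?_⟩
    have hmul : p * psiR φ y = y - p * (φ (1 / p)).toReal := by
      rw [hy]
      field_simp
    linarith [hb hp]

theorem perspectiveExcess_eq (hφ : IsDivergenceFunction φ) (x : ℝ) {t : ℝ} (ht : 0 < t) :
    perspectiveExcess (fun z => (φ z).toReal) x t = ENNReal.ofReal (t * psiR φ (x / t) - x) :=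
  perspectiveExcess_eq_ofReal ht (hφ.isLUB_psiR (x / t))

variable {P : Measure Ω} {X : Ω → ℝ} {β t : ℝ}

theorem riskExcess_mul_eq (hφ : IsDivergenceFunction φ) (β : ℝ) (P : Measure Ω) (X : Ω → ℝ)
    (μ : ℝ) (ht : 0 < t) :
    riskExcess (fun z => (φ z).toReal) β P X (μ * t) t = ENNReal.ofReal (β * t) +
      ∫⁻ ω, ENNReal.ofReal (t * psiR φ (X ω / t - μ) - (X ω - μ * t)) ∂P := by
  simp only [riskExcess, hφ.perspectiveExcess_eq _ ht, sub_div, mul_div_cancel_right₀ μ ht.ne']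

theorem sub_mul_le_mul_psiR (hφ : IsDivergenceFunction φ) (x μ : ℝ) (ht : 0 < t) :
    x - μ * t ≤ t * psiR φ (x / t - μ) := by
  calc x - μ * t = t * (x / t - μ) := by field_simp
    _ ≤ t * psiR φ (x / t - μ) := mul_le_mul_of_nonneg_left (hφ.le_psiR _) ht.le

theorem integrable_mul_psiR_sub_iff [IsFiniteMeasure P] (φ : ℝ → EReal) (hX : Integrable X P)
    (μ : ℝ) (ht : t ≠ 0) :
    Integrable (fun ω => t * psiR φ (X ω / t - μ) - (X ω - μ * t)) P ↔
      Integrable (fun ω => psiR φ (X ω / t - μ)) P :=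
  (integrable_add_iff_integrable_left' (hX.sub (integrable_const (μ * t))).neg).trans
    (integrable_const_mul_iff (IsUnit.mk0 t ht) _)

theorem rhoObj_eq [IsProbabilityMeasure P] (hφ : IsDivergenceFunction φ) (hβ : 0 ≤ β)
    (hX : Integrable X P) (μ : ℝ) (ht : 0 < t) :
    rhoObj φ β P X μ t
      = (∫ ω, X ω ∂P : ℝ) + (riskExcess (fun z => (φ z).toReal) β P X (μ * t) t : EReal) := by
  have hlin : Integrable (fun ω => X ω - μ * t) P := hX.sub (integrable_const _)
  have hmeas : AEStronglyMeasurable (fun ω => t * psiR φ (X ω / t - μ) - (X ω - μ * t)) P :=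
    ((hφ.monotone_psiR.measurable.comp_aemeasurable
      ((hX.aemeasurable.div_const t).sub_const μ)).const_mul t).aestronglyMeasurable.sub hlin.1
  have hnonneg : ∀ ω, 0 ≤ t * psiR φ (X ω / t - μ) - (X ω - μ * t) := fun ω =>
    sub_nonneg.2 (hφ.sub_mul_le_mul_psiR (X ω) μ ht)
  rw [hφ.riskExcess_mul_eq β P X μ ht, rhoObj]
  split_ifs with hpsi
  · have hint : ∫ ω, (t * psiR φ (X ω / t - μ) - (X ω - μ * t)) ∂P
        = t * ∫ ω, psiR φ (X ω / t - μ) ∂P - (∫ ω, X ω ∂P - μ * t) := by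
      rw [integral_sub (hpsi.const_mul t) hlin, integral_const_mul,
        integral_sub hX (integrable_const _)]
      simp
    rw [← ofReal_integral_eq_lintegral_ofReal
        ((integrable_mul_psiR_sub_iff φ hX μ ht.ne').2 hpsi) (Eventually.of_forall hnonneg),
      ← ENNReal.ofReal_add (mul_nonneg hβ ht.le) (integral_nonneg hnonneg),
      EReal.coe_ennreal_ofReal,
      max_eq_left (add_nonneg (mul_nonneg hβ ht.le) (integral_nonneg hnonneg)), hint,
      ← EReal.coe_add]
    congr 1
    ring
  · have htop : ∫⁻ ω, ENNReal.ofReal (t * psiR φ (X ω / t - μ) - (X ω - μ * t)) ∂P = ∞ := by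
      by_contra hfin
      exact hpsi <| (integrable_mul_psiR_sub_iff φ hX μ ht.ne').1 <|
        (lintegral_ofReal_ne_top_iff_integrable hmeas (Eventually.of_forall hnonneg)).1 hfin
    rw [htop, add_top, EReal.coe_ennreal_top, EReal.coe_add_top]

theorem exists_rhoObj_lt [IsProbabilityMeasure P] (hφ : IsDivergenceFunction φ)
    (hX : AEMeasurable X P) {s : ℝ} (hXs : ∀ᵐ ω ∂P, X ω ≤ s)
    (hβ : 0 < P.real {ω | X ω = s} → β < P.real {ω | X ω = s} *
      (φ (1 / P.real {ω | X ω = s})).toReal + (1 - P.real {ω | X ω = s}) * (φ 0).toReal) :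
    ∃ μ t : ℝ, 0 < t ∧ rhoObj φ β P X μ t < s := by
  set p := P.real {ω | X ω = s} with hp
  obtain ⟨y, hy⟩ := hφ.exists_add_mul_psiR_lt (p := p) (b := β - (1 - p) * (φ 0).toReal)
    measureReal_nonneg fun hpos => sub_lt_iff_lt_add.2 (hβ hpos)
  have hlim : Tendsto (fun t => ∫ ω, psiR φ ((X ω - s) / t + y) ∂P) (𝓝[>] 0)
      (𝓝 (p * psiR φ y + (1 - p) * -(φ 0).toReal)) := by
    have hnull : NullMeasurableSet {ω | X ω = s} P := nullMeasurableSet_eq_fun hX aemeasurable_const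
    have := tendsto_integral_comp_div_add hφ.monotone_psiR hφ.tendsto_psiR_atBot
      (hX.sub_const s) (hXs.mono fun _ => sub_nonpos.2) y
    simpa only [sub_eq_zero, probReal_compl_eq_one_sub₀ hnull, ← hp] using this
  obtain ⟨t, hlt, ht : 0 < t⟩ := ((hlim.eventually_lt_const
    (show _ < y - β by linarith)).and self_mem_nhdsWithin).exists
  have harg : (fun ω => psiR φ (X ω / t - (s / t - y)))
      = fun ω => psiR φ ((X ω - s) / t + y) :=
    funext fun ω => congrArg (psiR φ) (by ring)
  have hint : Integrable (fun ω => psiR φ ((X ω - s) / t + y)) P :=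
    integrable_comp_of_monotone_of_ae_le hφ.monotone_psiR hφ.tendsto_psiR_atBot
      (((hX.sub_const s).div_const t).add_const y) (c := y) <| hXs.mono fun ω hω =>
        add_le_of_nonpos_left (div_nonpos_of_nonpos_of_nonneg (sub_nonpos.2 hω) ht.le)
  refine ⟨s / t - y, t, ht, ?_⟩
  rw [rhoObj, harg, if_pos hint, EReal.coe_lt_coe_iff]
  calc t * (β + (s / t - y) + ∫ ω, psiR φ ((X ω - s) / t + y) ∂P)
      < t * (s / t) := mul_lt_mul_of_pos_left (by linarith) ht
    _ = s := mul_div_cancel₀ s ht.ne'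

theorem le_rhoDiv_of_isMinOn_riskExcess [IsProbabilityMeasure P] (hφ : IsDivergenceFunction φ)
    (hβ : 0 ≤ β) (hX : Integrable X P) {p : ℝ × ℝ}
    (hp : IsMinOn (fun p : ℝ × ℝ => riskExcess (fun z => (φ z).toReal) β P X p.1 p.2)
      {p | 0 ≤ p.2} p) :
    (∫ ω, X ω ∂P : ℝ) + (riskExcess (fun z => (φ z).toReal) β P X p.1 p.2 : EReal)
      ≤ rhoDiv φ β P X := by
  refine le_iInf fun μ => le_iInf fun t => le_iInf fun ht => ?_
  rw [hφ.rhoObj_eq hβ hX μ ht]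
  exact add_le_add_right
    (EReal.coe_ennreal_le_coe_ennreal_iff.2 (isMinOn_iff.1 hp (μ * t, t) ht.le)) _

theorem exists_rhoObj_le_integral_add_riskExcess [IsProbabilityMeasure P]
    (hφ : IsDivergenceFunction φ) (hβ : 0 ≤ β) (hX : Integrable X P) {m : ℝ} (ht : 0 ≤ t)
    (hm : (∀ᵐ ω ∂P, X ω ≤ m) → ∃ μ t' : ℝ, 0 < t' ∧ rhoObj φ β P X μ t' < m) :
    ∃ μ t' : ℝ, 0 < t' ∧ rhoObj φ β P X μ t'
      ≤ (∫ ω, X ω ∂P : ℝ) + (riskExcess (fun z => (φ z).toReal) β P X m t : EReal) := by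
  rcases ht.eq_or_lt with rfl | ht
  · by_cases hfin : riskExcess (fun z => (φ z).toReal) β P X m 0 = ∞
    · exact ⟨0, 1, one_pos, by simp [hfin]⟩
    · obtain ⟨μ, t', ht', hlt⟩ := hm (ae_le_of_riskExcess_zero_ne_top hX.aemeasurable hfin)
      exact ⟨μ, t', ht', hlt.le.trans (coe_le_integral_add_riskExcess_zero _ β hX m)⟩
  · refine ⟨m / t, t, ht, le_of_eq ?_⟩
    rw [hφ.rhoObj_eq hβ hX _ ht, div_mul_cancel₀ m ht.ne']

end IsDivergenceFunction

theorem lt_of_isGreatest_of_lt_one_sub {φ : ℝ → EReal} {β abar p : ℝ}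
    (habar : IsGreatest {α : ℝ | 0 ≤ α ∧ α < 1 ∧
      (φ 0).toReal * α + (φ (1 / (1 - α))).toReal * (1 - α) ≤ β} abar)
    (hp : 0 < p) (hlt : p < 1 - abar) :
    β < p * (φ (1 / p)).toReal + (1 - p) * (φ 0).toReal := by
  by_contra! hle
  have hmem : 1 - p ≤ abar := habar.2 ⟨by linarith [habar.1.1], by linarith, by
    rw [sub_sub_cancel]
    linarith⟩
  linarith

theorem exists_rhoObj_lt_of_ae_le {P : Measure Ω} [IsProbabilityMeasure P] {φ : ℝ → EReal}
    (hφ : IsDivergenceFunction φ) {β : ℝ} {X : Ω → ℝ} (hX : AEMeasurable X P) {abar : ℝ}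
    (habar : IsGreatest {α : ℝ | 0 ≤ α ∧ α < 1 ∧
      (φ 0).toReal * α + (φ (1 / (1 - α))).toReal * (1 - α) ≤ β} abar)
    (hsup : (P {ω | ((X ω : ℝ) : EReal) = essSup (fun ω' => ((X ω' : ℝ) : EReal)) P}).toReal
      < 1 - abar) {m : ℝ} (hm : ∀ᵐ ω ∂P, X ω ≤ m) :
    ∃ μ t : ℝ, 0 < t ∧ rhoObj φ β P X μ t < m := by
  obtain ⟨s, hsm, hXs, hs⟩ := exists_essSup_eq_coe_of_ae_le hm
  simp only [hs, EReal.coe_eq_coe_iff] at hsup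
  obtain ⟨μ, t, ht, hlt⟩ := hφ.exists_rhoObj_lt hX hXs fun hpos =>
    lt_of_isGreatest_of_lt_one_sub habar hpos hsup
  exact ⟨μ, t, ht, hlt.trans_le (EReal.coe_le_coe_iff.2 hsm)⟩

theorem rhoDiv_attained_general (P : Measure Ω) [IsProbabilityMeasure P]
    (φ : ℝ → EReal) (hφ : IsDivergenceFunction φ) (β : ℝ) (hβ : 0 < β)
    (X : Ω → ℝ) (hX : Integrable X P)
    (abar : ℝ)
    (habar : IsGreatest {α : ℝ | 0 ≤ α ∧ α < 1 ∧
      (φ 0).toReal * α + (φ (1 / (1 - α))).toReal * (1 - α) ≤ β} abar)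
    (hsup : (P {ω | ((X ω : ℝ) : EReal) = essSup (fun ω' => ((X ω' : ℝ) : EReal)) P}).toReal
      < 1 - abar) :
    ∃ μ t : ℝ, 0 < t ∧ rhoObj φ β P X μ t = rhoDiv φ β P X := by
  obtain ⟨⟨m, t₀⟩, ht₀, hmin⟩ := exists_isMinOn_riskExcess (fun z => (φ z).toReal) hβ hX
  obtain ⟨μ, t, ht, hle⟩ := hφ.exists_rhoObj_le_integral_add_riskExcess hβ.le hX ht₀
    (exists_rhoObj_lt_of_ae_le hφ hX.aemeasurable habar hsup)
  exact ⟨μ, t, ht, le_antisymm (hle.trans (hφ.le_rhoDiv_of_isMinOn_riskExcess hβ.le hX hmin))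
    (iInf_le_of_le μ (iInf_le_of_le t (iInf_le _ ht)))⟩

/-- Existence of minimizers: if `P(X = esssup X) < 1 − ᾱ`, where `ᾱ` is the largest
`α ∈ [0,1)` with `φ(0)·α + φ(1/(1−α))·(1−α) ≤ β`, then the infimum defining
`ρ_{φ,β}(X)` is attained at some `μ ∈ ℝ` and `t > 0`. -/
theorem rhoDiv_attained (P : Measure Ω) [IsProbabilityMeasure P]
    (φ : ℝ → EReal) (hφ : IsDivergenceFunction φ) (β : ℝ) (hβ : 0 < β)
    (X : Ω → ℝ) (hX : Integrable X P)
    (hXpsi : ∃ t : ℝ, 0 < t ∧ Integrable (fun ω => psiR φ (t * |X ω|)) P)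
    (abar : ℝ)
    (habar : IsGreatest {α : ℝ | 0 ≤ α ∧ α < 1 ∧
      (φ 0).toReal * α + (φ (1 / (1 - α))).toReal * (1 - α) ≤ β} abar)
    (hsup : (P {ω | ((X ω : ℝ) : EReal) = essSup (fun ω' => ((X ω' : ℝ) : EReal)) P}).toReal
      < 1 - abar) :
    ∃ μ t : ℝ, 0 < t ∧ rhoObj φ β P X μ t = rhoDiv φ β P X :=
  rhoDiv_attained_general P φ hφ β hβ X hX abar habar hsup
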